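/- Let N be a positive integer, 0 ≤ α < 1/4, and let x̃_{−N},…,x̃_N be a set of α-perturbed nodes. Then for every trigonometric polynomial q ∈ T_N, ((1−φ_α)²/(2π)) ∫_{−π}^{π} |q(x)|² dx ≤ (1/(2N+1)) Σ_{j=−N}^{N} |q(x̃_j)|² ≤ ((1+φ_α)²/(2π)) ∫_{−π}^{π} |q(x)|² dx, where φ_α = 1 − cos(πα) + sin(πα). -/

import Mathlib

open Real Finset

/-- `q` is a trigonometric polynomial of degree ≤ N. -/
def IsTrigPoly (N : ℕ) (q : ℝ → ℂ) : Prop :=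
  ∃ c : ℤ → ℂ, ∀ x : ℝ,
    q x = ∑ k ∈ Finset.Icc (-(N:ℤ)) (N:ℤ), c k * Complex.exp (Complex.I * (k : ℂ) * (x : ℂ))

/-- `x` is a set of α-perturbed nodes of size 2N+1. -/
def PerturbedNodes (N : ℕ) (α : ℝ) (x : ℤ → ℝ) : Prop :=
  ∀ j ∈ Finset.Icc (-(N:ℤ)) (N:ℤ),
    |x j - (j : ℝ) * (2*π/(2*N+1))| ≤ α * (2*π/(2*N+1))

/-!
Write `h = 2π / (2N+1)` and `x j = (j + δ j) h`. Then `q (x j) = ∑ k, c k e^{ikjh} e^{i (δ j) (kh)}`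
with `kh ∈ [-π, π]`, so the perturbation multiplies the Fourier matrix entrywise by
`e^{i (δ j) (kh)}`. By Kadec's argument, `e^{iδt} - 1 = -(1 - cos δt) + i sin δt` is expanded on
`[-π, π]` in exponentials in `t`: `1 - cos δt` in the `e^{imt}`, and `sin δt` in the
`e^{i(m - 1/2)t}`. Each coefficient is largest in absolute value at `δ = α`, and the moduli at
`δ = α` have the sums `1 - cos πα` and `sin πα`, since the signs line up at `t = π`. Every
exponential has modulus one, so the perturbation changes the Fourier matrix by at most `φ_α` times
its operator norm, and the triangle inequality in `ℓ²` together with Parseval gives both bounds.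
-/

theorem antitoneOn_sinc : AntitoneOn sinc (Set.Icc 0 π) := by
  intro x hx y hy hxy
  rcases hx.1.eq_or_lt with rfl | hx0
  · simpa using sinc_le_one y
  have hy0 : 0 < y := hx0.trans_le hxy
  rw [sinc_of_ne_zero hx0.ne', sinc_of_ne_zero hy0.ne']
  have hslope := strictConcaveOn_sin_Icc.concaveOn.slope_anti (Set.left_mem_Icc.2 pi_pos.le)
    ⟨hx, hx0.ne'⟩ ⟨hy, hy0.ne'⟩ hxy
  simpa [slope_def_field] using hslope

theorem sin_le_cos_of_nonneg_of_le_pi_div_four {x : ℝ} (hx0 : 0 ≤ x) (hx : x ≤ π / 4) :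
    sin x ≤ cos x := by
  rw [← cos_pi_div_two_sub]
  exact cos_le_cos_of_nonneg_of_le_pi hx0 (by linarith) (by linarith)

theorem monotoneOn_mul_cos : MonotoneOn (fun x => x * cos x) (Set.Icc 0 (π / 4)) := by
  refine monotoneOn_of_deriv_nonneg (convex_Icc _ _) (by fun_prop) (by fun_prop) fun x hx => ?_
  rw [interior_Icc] at hx
  have hderiv : deriv (fun x => x * cos x) x = cos x - x * sin x := by
    simp [deriv_fun_mul, sub_eq_add_neg]
  have hsin : 0 ≤ sin x := sin_nonneg_of_nonneg_of_le_pi hx.1.le (by linarith [hx.2, pi_pos])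
  have hx1 : x ≤ 1 := by linarith [hx.2, pi_lt_four]
  rw [hderiv, sub_nonneg]
  exact (mul_le_of_le_one_left hsin hx1).trans
    (sin_le_cos_of_nonneg_of_le_pi_div_four hx.1.le hx.2.le)

theorem hasSum_fourierCoeffOn {a b : ℝ} (hab : a < b) {f : ℝ → ℂ}
    (hf : ContinuousOn f (Set.Icc a b)) (hper : f a = f b)
    (hsum : Summable (fourierCoeffOn hab f)) {x : ℝ} (hx : x ∈ Set.Icc a b) :
    HasSum (fun n : ℤ => fourierCoeffOn hab f n • fourier n (x : AddCircle (b - a))) (f x) := by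
  have : Fact (0 < b - a) := ⟨sub_pos.2 hab⟩
  have hb : a + (b - a) = b := add_sub_cancel a b
  let F : C(AddCircle (b - a), ℂ) := ⟨AddCircle.liftIoc (b - a) a f,
    AddCircle.liftIoc_continuous (by rwa [hb]) (by rwa [hb])⟩
  have hFx : F x = f x := by
    rcases hx.1.eq_or_lt with rfl | hax
    · rw [← AddCircle.coe_add_period, hb, hper]
      exact AddCircle.liftIoc_coe_apply ⟨hab, hb.ge⟩
    · exact AddCircle.liftIoc_coe_apply ⟨hax, hx.2.trans hb.ge⟩
  rw [← hFx]
  exact has_pointwise_sum_fourier_series_of_summable (f := F) hsum x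

theorem fourier_coe_neg_pi_pi (n : ℤ) (t : ℝ) :
    fourier n (t : AddCircle (π - -π)) = Complex.exp (Complex.I * n * t) := by
  have hπ : (π : ℂ) ≠ 0 := Complex.ofReal_ne_zero.2 pi_ne_zero
  rw [fourier_coe_apply]
  congr 1
  push_cast
  field_simp
  ring

theorem integral_exp_I_mul (ω : ℝ) :
    ∫ t in (-π)..π, Complex.exp (Complex.I * ω * t) = 2 * π * sinc (π * ω) := by
  rcases eq_or_ne ω 0 with rfl | hω
  · simp [two_mul]
  · have hcomp := intervalIntegral.integral_comp_mul_left (a := -π) (b := π)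
      (fun t : ℝ => Complex.exp (t * Complex.I)) hω
    rw [mul_neg, integral_exp_mul_I_eq_sinc] at hcomp
    calc ∫ t in (-π)..π, Complex.exp (Complex.I * ω * t)
        = ∫ t in (-π)..π, Complex.exp ((ω * t : ℝ) * Complex.I) := by
          simp only [Complex.ofReal_mul, mul_assoc, mul_comm Complex.I]
      _ = 2 * π * sinc (π * ω) := by
          rw [hcomp, Complex.real_smul, mul_comm π]
          have hω' : (ω : ℂ) ≠ 0 := Complex.ofReal_ne_zero.2 hω
          push_cast
          field_simp

theorem fourierCoeffOn_sum_exp {κ : Type*} (s : Finset κ) (c : κ → ℂ) (ω : κ → ℝ) (n : ℤ) :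
    fourierCoeffOn (neg_lt_self pi_pos)
      (fun t => ∑ k ∈ s, c k * Complex.exp (Complex.I * ω k * t)) n =
      ∑ k ∈ s, c k * sinc (π * (ω k - n)) := by
  have hπ : (π : ℂ) ≠ 0 := Complex.ofReal_ne_zero.2 pi_ne_zero
  have hmul (t : ℝ) : fourier (-n) (t : AddCircle (π - -π)) •
      ∑ k ∈ s, c k * Complex.exp (Complex.I * ω k * t) =
      ∑ k ∈ s, c k * Complex.exp (Complex.I * (ω k - n : ℝ) * t) := by
    rw [fourier_coe_neg_pi_pi, smul_eq_mul, Finset.mul_sum]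
    refine Finset.sum_congr rfl fun k _ => ?_
    rw [mul_left_comm, ← Complex.exp_add]
    push_cast
    ring_nf
  simp_rw [fourierCoeffOn_eq_integral, hmul]
  rw [intervalIntegral.integral_finsetSum fun k _ =>
    Continuous.intervalIntegrable (by fun_prop) _ _]
  simp_rw [intervalIntegral.integral_const_mul, integral_exp_I_mul, Complex.real_smul,
    Finset.mul_sum]
  refine Finset.sum_congr rfl fun k _ => ?_
  push_cast
  field_simp
  ring

theorem sinc_pi_mul_intCast (n : ℤ) : sinc (π * n) = if n = 0 then 1 else 0 := by
  split_ifs with hn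
  · simp [hn]
  · rw [sinc_of_ne_zero (mul_ne_zero pi_ne_zero (Int.cast_ne_zero.2 hn)), mul_comm, sin_int_mul_pi,
      zero_div]

theorem integral_norm_sum_exp_sq (s : Finset ℤ) (c : ℤ → ℂ) :
    ∫ t in (-π)..π, ‖∑ k ∈ s, c k * Complex.exp (Complex.I * k * t)‖ ^ 2 =
      2 * π * ∑ k ∈ s, ‖c k‖ ^ 2 := by
  let q (t : ℝ) : ℂ := ∑ k ∈ s, c k * Complex.exp (Complex.I * k * t)
  have hcoeff (n : ℤ) : fourierCoeffOn (neg_lt_self pi_pos) q n = if n ∈ s then c n else 0 := by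
    have h := fourierCoeffOn_sum_exp s c (fun k : ℤ => (k : ℝ)) n
    simp only [← Int.cast_sub, sinc_pi_mul_intCast, sub_eq_zero] at h
    simpa [q, apply_ite Complex.ofReal] using h
  have hq : Continuous q := by fun_prop
  have hL2 : MeasureTheory.MemLp q 2 (MeasureTheory.volume.restrict (Set.Ioc (-π) π)) :=
    (MeasureTheory.memLp_two_iff_integrable_sq_norm hq.aestronglyMeasurable).2
      ((hq.norm.pow 2).integrableOn_Ioc)
  have hParseval := tsum_sq_fourierCoeffOn (neg_lt_self pi_pos) hL2
  rw [tsum_eq_sum (s := s) fun n hn => by simp [hcoeff, hn],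
    Finset.sum_congr rfl fun n hn => by rw [hcoeff, if_pos hn], smul_eq_mul, sub_neg_eq_add,
    ← two_mul] at hParseval
  rw [hParseval, mul_inv_cancel_left₀ two_pi_pos.ne']

theorem sinc_pi_mul_sub_intCast {ω : ℝ} {m : ℤ} (h : ω ≠ m) :
    sinc (π * (ω - m)) = (-1) ^ m * sin (π * ω) / (π * (ω - m)) := by
  rw [sinc_of_ne_zero (mul_ne_zero pi_ne_zero (sub_ne_zero.2 h)), mul_sub, mul_comm π (m : ℝ),
    sin_sub_int_mul_pi]

theorem summable_sinc_pi_mul_sub_intCast_add (ω : ℝ) :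
    Summable fun m : ℤ => sinc (π * (ω - m)) + (-1) ^ m * sin (π * ω) / (π * m) := by
  have hmain : Summable fun m : ℤ => ω * sin (π * ω) / π * ((ω - m) * m)⁻¹ := by
    refine Summable.mul_left _ (Complex.summable_ofReal.1 ?_)
    simpa using EisensteinSeries.summable_linear_sub_mul_linear_add ω 1 0
  have hmain' : Summable fun m : ℤ => (-1) ^ m * (ω * sin (π * ω) / π * ((ω - m) * m)⁻¹) :=
    Summable.of_norm (by simpa only [norm_mul, norm_zpow, norm_neg, norm_one, one_zpow, one_mul]
      using hmain.norm)
  refine hmain'.congr_cofinite ?_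
  have hω : ∀ᶠ m : ℤ in Filter.cofinite, (m : ℝ) ≠ ω :=
    Int.cast_injective.tendsto_cofinite.eventually (Set.finite_singleton ω).compl_mem_cofinite
  have h0 : ∀ᶠ m : ℤ in Filter.cofinite, m ≠ 0 := (Set.finite_singleton 0).compl_mem_cofinite
  filter_upwards [hω, h0] with m hmω hm0
  have hm0' : (m : ℝ) ≠ 0 := Int.cast_ne_zero.2 hm0
  rw [sinc_pi_mul_sub_intCast hmω.symm]
  have := sub_ne_zero.2 hmω.symm
  field_simp
  ring

section SumExp

variable {κ : Type*} {s : Finset κ} {c : κ → ℂ} {ω : κ → ℝ}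

theorem summable_sum_mul_sinc (h : ∑ k ∈ s, c k * sin (π * ω k) = 0) :
    Summable fun m : ℤ => ∑ k ∈ s, c k * sinc (π * (ω k - m)) := by
  have hsum := summable_sum (s := s) fun k _ =>
    (Complex.summable_ofReal.2 (summable_sinc_pi_mul_sub_intCast_add (ω k))).mul_left (c k)
  refine hsum.congr fun m => ?_
  have hzero : ∑ k ∈ s, c k * (((-1) ^ m * sin (π * ω k) / (π * m) : ℝ) : ℂ) = 0 := by
    rw [← mul_zero ((-1) ^ m / (π * m) : ℂ), ← h, Finset.mul_sum]
    exact Finset.sum_congr rfl fun k _ => by push_cast; ring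
  simp_rw [Complex.ofReal_add, mul_add, Finset.sum_add_distrib, hzero, add_zero]

theorem sum_mul_exp_neg_pi_eq (h : ∑ k ∈ s, c k * sin (π * ω k) = 0) :
    ∑ k ∈ s, c k * Complex.exp (Complex.I * ω k * (-π : ℝ)) =
      ∑ k ∈ s, c k * Complex.exp (Complex.I * ω k * π) := by
  rw [← sub_eq_zero, ← Finset.sum_sub_distrib, ← mul_zero (-2 * Complex.I), ← h, Finset.mul_sum]
  refine Finset.sum_congr rfl fun k _ => ?_
  have hpos : Complex.I * ω k * π = (π * ω k : ℂ) * Complex.I := by ring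
  have hneg : Complex.I * ω k * (-π : ℝ) = -(π * ω k : ℂ) * Complex.I := by push_cast; ring
  rw [hpos, hneg, Complex.exp_mul_I, Complex.exp_mul_I, Complex.cos_neg, Complex.sin_neg]
  push_cast
  ring

theorem hasSum_sum_mul_sinc_mul_exp (h : ∑ k ∈ s, c k * sin (π * ω k) = 0) {t : ℝ}
    (ht : t ∈ Set.Icc (-π) π) :
    HasSum (fun m : ℤ => (∑ k ∈ s, c k * sinc (π * (ω k - m))) * Complex.exp (Complex.I * m * t))
      (∑ k ∈ s, c k * Complex.exp (Complex.I * ω k * t)) := by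
  have hcoeff := fourierCoeffOn_sum_exp s c ω
  have hFourier := hasSum_fourierCoeffOn (neg_lt_self pi_pos)
    (f := fun t : ℝ => ∑ k ∈ s, c k * Complex.exp (Complex.I * ω k * t))
    (Continuous.continuousOn (by fun_prop)) (sum_mul_exp_neg_pi_eq h)
    ((summable_congr hcoeff).2 (summable_sum_mul_sinc h)) ht
  simpa only [hcoeff, fourier_coe_neg_pi_pi, smul_eq_mul] using hFourier

end SumExp

/-- The coefficient of `(-1) ^ m * exp (i m t)` in the Fourier series of `1 - cos (δ t)` on
`[-π, π]`; the sign is split off because `(-1) ^ m * exp (i m t)` equals `1` at `t = π`. -/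
noncomputable def cosCoeff (δ : ℝ) (m : ℤ) : ℝ :=
  if m = 0 then 1 - sinc (π * δ) else δ * sin (π * δ) / (π * (m ^ 2 - δ ^ 2))

/-- The coefficient of `i (-1) ^ m * exp (i (m - 1/2) t)` in the expansion of `sin (δ t)` on
`[-π, π]`; the half-integer frequencies make every such exponential equal to `1` at `t = π`. -/
noncomputable def sinCoeff (δ : ℝ) (m : ℤ) : ℝ :=
  δ * cos (π * δ) / (π * ((m - 1 / 2) ^ 2 - δ ^ 2))

theorem cosCoeff_neg (δ : ℝ) (m : ℤ) : cosCoeff (-δ) m = cosCoeff δ m := by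
  simp [cosCoeff, sinc_neg]

theorem sinCoeff_neg (δ : ℝ) (m : ℤ) : sinCoeff (-δ) m = -sinCoeff δ m := by
  simp [sinCoeff, neg_div]

theorem one_le_intCast_sq {m : ℤ} (hm : m ≠ 0) : (1 : ℝ) ≤ (m : ℝ) ^ 2 := by
  exact_mod_cast (sq_pos_of_ne_zero hm : 0 < m ^ 2)

theorem one_div_four_le_intCast_sub_half_sq (m : ℤ) : (1 / 4 : ℝ) ≤ ((m : ℝ) - 1 / 2) ^ 2 := by
  have hodd : (1 : ℝ) ≤ ((2 * m - 1 : ℤ) : ℝ) ^ 2 := one_le_intCast_sq (by omega)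
  push_cast at hodd
  linarith

section Domination

variable {α δ : ℝ} (hδ : |δ| ≤ α)
include hδ

theorem abs_cosCoeff_le_cosCoeff (hα : α ≤ 1 / 2) (m : ℤ) : |cosCoeff δ m| ≤ cosCoeff α m := by
  wlog hδ0 : 0 ≤ δ generalizing δ
  · rw [← cosCoeff_neg]
    exact this (by rwa [abs_neg]) (neg_nonneg.2 (le_of_not_ge hδ0))
  rw [abs_of_nonneg hδ0] at hδ
  have hα0 : 0 ≤ α := hδ0.trans hδ
  have hπδ : π * δ ≤ π * α := by gcongr
  have hπα : π * α ≤ π / 2 := by linarith [mul_le_mul_of_nonneg_left hα pi_pos.le]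
  have hπδ0 : 0 ≤ π * δ := by positivity
  have hπ := pi_pos
  by_cases hm : m = 0
  · simp only [cosCoeff, if_pos hm]
    rw [abs_of_nonneg (sub_nonneg.2 (sinc_le_one _))]
    exact sub_le_sub_left
      (antitoneOn_sinc ⟨hπδ0, by linarith⟩ ⟨by linarith, by linarith⟩ hπδ) 1
  · have hm1 := one_le_intCast_sq hm
    have hs : 0 ≤ sin (π * δ) := sin_nonneg_of_nonneg_of_le_pi hπδ0 (by linarith)
    have hs' : sin (π * δ) ≤ sin (π * α) :=
      sin_le_sin_of_le_of_le_pi_div_two (by linarith) hπα hπδ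
    have hsα := hs.trans hs'
    have hα1 : 0 < (m : ℝ) ^ 2 - α ^ 2 := by nlinarith
    have hδ1 : 0 < (m : ℝ) ^ 2 - δ ^ 2 := by nlinarith
    simp only [cosCoeff, if_neg hm]
    rw [abs_of_nonneg (by positivity)]
    gcongr

theorem abs_sinCoeff_le_sinCoeff (hα : α ≤ 1 / 4) (m : ℤ) : |sinCoeff δ m| ≤ sinCoeff α m := by
  wlog hδ0 : 0 ≤ δ generalizing δ
  · rw [← abs_neg, ← sinCoeff_neg]
    exact this (by rwa [abs_neg]) (neg_nonneg.2 (le_of_not_ge hδ0))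
  rw [abs_of_nonneg hδ0] at hδ
  have hα0 : 0 ≤ α := hδ0.trans hδ
  have hπδ : π * δ ≤ π * α := by gcongr
  have hπα : π * α ≤ π / 4 := by linarith [mul_le_mul_of_nonneg_left hα pi_pos.le]
  have hπδ0 : 0 ≤ π * δ := by positivity
  have hm := one_div_four_le_intCast_sub_half_sq m
  have hπ := pi_pos
  have hmul : δ * cos (π * δ) ≤ α * cos (π * α) := by
    have h := monotoneOn_mul_cos ⟨hπδ0, by linarith⟩ ⟨by linarith, hπα⟩ hπδ
    simp only [mul_assoc] at h
    exact le_of_mul_le_mul_left h hπ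
  have hc : 0 ≤ cos (π * δ) := cos_nonneg_of_neg_pi_div_two_le_of_le (by linarith) (by linarith)
  have hcα : 0 ≤ cos (π * α) := cos_nonneg_of_neg_pi_div_two_le_of_le (by linarith) (by linarith)
  have hα1 : 0 < ((m : ℝ) - 1 / 2) ^ 2 - α ^ 2 := by nlinarith
  have hδ1 : 0 < ((m : ℝ) - 1 / 2) ^ 2 - δ ^ 2 := by nlinarith
  unfold sinCoeff
  rw [abs_of_nonneg (by positivity)]
  gcongr

end Domination

section Expansion

variable {δ : ℝ}

theorem sinc_sub_sinc_add_sinc_div_two (hδ : |δ| < 1) (m : ℤ) :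
    sinc (π * (0 - m)) - (sinc (π * (δ - m)) + sinc (π * (-δ - m))) / 2 =
      (-1) ^ m * cosCoeff δ m := by
  rcases eq_or_ne m 0 with rfl | hm
  · simp [cosCoeff, sinc_neg]
  · have hlt : δ ^ 2 < (m : ℝ) ^ 2 :=
      ((sq_lt_one_iff_abs_lt_one δ).2 hδ).trans_le (one_le_intCast_sq hm)
    have hne : (m : ℝ) ^ 2 - δ ^ 2 ≠ 0 := (sub_pos.2 hlt).ne'
    have h₀ : (0 : ℝ) ≠ m := (Int.cast_ne_zero.2 hm).symm
    have h₁ : δ ≠ m := fun h => hlt.ne (by rw [h])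
    have h₂ : -δ ≠ m := fun h => hlt.ne (by rw [← h, neg_sq])
    have h₁' := sub_ne_zero.2 h₁
    have h₂' := sub_ne_zero.2 h₂
    rw [sinc_pi_mul_sub_intCast h₀, sinc_pi_mul_sub_intCast h₁, sinc_pi_mul_sub_intCast h₂,
      cosCoeff, if_neg hm, mul_zero, sin_zero, mul_neg, sin_neg]
    field_simp
    ring

theorem sin_pi_mul_half_sub (x : ℝ) : sin (π * (1 / 2 - x)) = cos (π * x) := by
  rw [← sin_pi_div_two_sub]
  ring_nf

theorem sin_pi_mul_half_add (x : ℝ) : sin (π * (1 / 2 + x)) = cos (π * x) := by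
  rw [← sin_add_pi_div_two]
  ring_nf

theorem sinc_sub_sinc_div_two (hδ : |δ| < 1 / 2) (m : ℤ) :
    (sinc (π * (1 / 2 - δ - m)) - sinc (π * (1 / 2 + δ - m))) / 2 = (-1) ^ m * sinCoeff δ m := by
  have hlt : δ ^ 2 < ((m : ℝ) - 1 / 2) ^ 2 := by
    have hsq : δ ^ 2 < (1 / 2) ^ 2 := sq_lt_sq' (by linarith [abs_lt.1 hδ]) (abs_lt.1 hδ).2
    linarith [one_div_four_le_intCast_sub_half_sq m]
  have h₁ : 1 / 2 - δ ≠ m := fun h => hlt.ne (by rw [← h]; ring)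
  have h₂ : 1 / 2 + δ ≠ m := fun h => hlt.ne (by rw [← h]; ring)
  have h₁' := sub_ne_zero.2 h₁
  have h₂' := sub_ne_zero.2 h₂
  rw [sinc_pi_mul_sub_intCast h₁, sinc_pi_mul_sub_intCast h₂, sin_pi_mul_half_sub,
    sin_pi_mul_half_add, sinCoeff]
  have hnum : δ = ((1 / 2 + δ - m) - (1 / 2 - δ - m)) / 2 := by ring
  have hden : ((m : ℝ) - 1 / 2) ^ 2 - δ ^ 2 = (1 / 2 - δ - m) * (1 / 2 + δ - m) := by ring
  rw [hden]
  generalize 1 / 2 - δ - (m : ℝ) = a at *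
  generalize 1 / 2 + δ - (m : ℝ) = b at *
  field_simp
  linear_combination (-2 * cos (π * δ)) * hnum

theorem hasSum_one_sub_cos (hδ : |δ| < 1) {t : ℝ} (ht : t ∈ Set.Icc (-π) π) :
    HasSum (fun m : ℤ => cosCoeff δ m * ((-1) ^ m * Complex.exp (Complex.I * m * t)))
      (1 - Complex.cos (δ * t)) := by
  have hperiodic : ∑ k : Fin 3, (![1, -1 / 2, -1 / 2] k : ℂ) * sin (π * ![0, δ, -δ] k) = 0 := by
    simp [Fin.sum_univ_three]
  have hvalue : ∑ k : Fin 3, (![1, -1 / 2, -1 / 2] k : ℂ) *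
      Complex.exp (Complex.I * (![0, δ, -δ] k : ℝ) * t) = 1 - Complex.cos (δ * t) := by
    simp only [Fin.sum_univ_three, Matrix.cons_val, Complex.cos]
    push_cast
    simp only [mul_zero, zero_mul, Complex.exp_zero]
    ring_nf
  rw [← hvalue]
  refine (hasSum_sum_mul_sinc_mul_exp hperiodic ht).congr_fun fun m => ?_
  have hcoeff := congrArg Complex.ofReal (sinc_sub_sinc_add_sinc_div_two hδ m)
  simp only [Fin.sum_univ_three, Matrix.cons_val]
  push_cast at hcoeff ⊢
  linear_combination (-Complex.exp (Complex.I * m * t)) * hcoeff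

theorem hasSum_sin (hδ : |δ| < 1 / 2) {t : ℝ} (ht : t ∈ Set.Icc (-π) π) :
    HasSum (fun m : ℤ => sinCoeff δ m *
      (Complex.I * (-1) ^ m * Complex.exp (Complex.I * (m - 1 / 2) * t)))
      (Complex.sin (δ * t)) := by
  -- `exp (i t / 2) * sin (δ t)` takes the same value at `-π` and `π`, unlike `sin (δ t)` itself.
  have hperiodic : ∑ k : Fin 2, (![Complex.I / 2, -Complex.I / 2] k : ℂ) *
      sin (π * ![1 / 2 - δ, 1 / 2 + δ] k) = 0 := by
    simp only [Fin.sum_univ_two, Matrix.cons_val, sin_pi_mul_half_sub,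
      sin_pi_mul_half_add]
    ring
  have hvalue : Complex.exp (-(Complex.I * (1 / 2) * t)) *
      ∑ k : Fin 2, (![Complex.I / 2, -Complex.I / 2] k : ℂ) *
        Complex.exp (Complex.I * (![1 / 2 - δ, 1 / 2 + δ] k : ℝ) * t) = Complex.sin (δ * t) := by
    simp only [Fin.sum_univ_two, Matrix.cons_val, Complex.sin]
    simp only [mul_add, mul_left_comm (Complex.exp _), ← Complex.exp_add]
    push_cast
    ring_nf
  rw [← hvalue]
  refine ((hasSum_sum_mul_sinc_mul_exp hperiodic ht).mul_left _).congr_fun fun m => ?_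
  have hcoeff := congrArg Complex.ofReal (sinc_sub_sinc_div_two hδ m)
  simp only [Fin.sum_univ_two, Matrix.cons_val]
  push_cast at hcoeff ⊢
  have hshift : Complex.exp (Complex.I * (m - 1 / 2) * t) =
      Complex.exp (-(Complex.I * (1 / 2) * t)) * Complex.exp (Complex.I * m * t) := by
    rw [← Complex.exp_add]
    ring_nf
  rw [hshift]
  linear_combination (-Complex.I * Complex.exp (-(Complex.I * (1 / 2) * t)) *
    Complex.exp (Complex.I * m * t)) * hcoeff

theorem exp_I_mul_intCast_mul_pi (m : ℤ) : Complex.exp (Complex.I * m * π) = (-1) ^ m := by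
  rw [← Complex.exp_pi_mul_I, ← Complex.exp_int_mul]
  ring_nf

theorem neg_one_zpow_mul_self (m : ℤ) : (-1 : ℂ) ^ m * (-1) ^ m = 1 := by
  rw [← mul_zpow, neg_one_mul, neg_neg, one_zpow]

theorem hasSum_cosCoeff (hδ : |δ| < 1) : HasSum (cosCoeff δ) (1 - cos (π * δ)) := by
  have hunit (m : ℤ) : (-1) ^ m * Complex.exp (Complex.I * m * π) = 1 := by
    rw [exp_I_mul_intCast_mul_pi, neg_one_zpow_mul_self]
  have h := hasSum_one_sub_cos hδ (Set.right_mem_Icc.2 (neg_le_self pi_pos.le))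
  simp_rw [hunit, mul_one, mul_comm (δ : ℂ)] at h
  exact_mod_cast h

theorem hasSum_sinCoeff (hδ : |δ| < 1 / 2) : HasSum (sinCoeff δ) (sin (π * δ)) := by
  have hunit (m : ℤ) :
      Complex.I * (-1) ^ m * Complex.exp (Complex.I * (m - 1 / 2) * π) = 1 := by
    have hexp : Complex.exp (Complex.I * (m - 1 / 2) * π) =
        Complex.exp (Complex.I * m * π) * (Complex.exp (π / 2 * Complex.I))⁻¹ := by
      rw [← Complex.exp_neg, ← Complex.exp_add]
      ring_nf
    rw [hexp, exp_I_mul_intCast_mul_pi, Complex.exp_pi_div_two_mul_I]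
    linear_combination neg_one_zpow_mul_self m +
      (-1) ^ m * (-1) ^ m * mul_inv_cancel₀ Complex.I_ne_zero
  have h := hasSum_sin hδ (Set.right_mem_Icc.2 (neg_le_self pi_pos.le))
  simp_rw [hunit, mul_one, mul_comm (δ : ℂ)] at h
  exact_mod_cast h

end Expansion

open scoped Matrix Matrix.Norms.L2Operator in
theorem l2_opNorm_hadamard_le {𝕜 ι κ μ : Type*} [RCLike 𝕜] [Fintype ι] [Fintype κ]
    [DecidableEq κ] {F : Matrix ι κ 𝕜} {a : μ → ι → 𝕜} {e : μ → κ → 𝕜} {g : μ → ℝ} {G : ℝ}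
    (hF : ∀ j k, HasSum (fun m => a m j * e m k) (F j k)) (ha : ∀ m, ‖a m‖ ≤ g m)
    (he : ∀ m, ‖e m‖ ≤ 1) (hg : HasSum g G) (A : Matrix ι κ 𝕜) : ‖F ⊙ A‖ ≤ G * ‖A‖ := by
  classical
  have hsum : HasSum (fun m => Matrix.diagonal (a m) * A * Matrix.diagonal (e m)) (F ⊙ A) := by
    refine Pi.hasSum.2 fun j => Pi.hasSum.2 fun k => ?_
    simpa only [Matrix.mul_diagonal, Matrix.diagonal_mul, Matrix.hadamard_apply, mul_right_comm]
      using (hF j k).mul_right (A j k)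
  refine hsum.norm_le_of_bounded (hg.mul_right ‖A‖) fun m => ?_
  calc ‖Matrix.diagonal (a m) * A * Matrix.diagonal (e m)‖
      ≤ ‖a m‖ * ‖A‖ * ‖e m‖ := by
        grw [Matrix.l2_opNorm_mul, Matrix.l2_opNorm_mul, Matrix.l2_opNorm_diagonal,
          Matrix.l2_opNorm_diagonal]
    _ ≤ g m * ‖A‖ := by
        grw [he m, ha m, mul_one]

/-- The constant `φ_α` bounding the relative size of a perturbation by at most `α` steps. -/
noncomputable def kadecConst (α : ℝ) : ℝ := 1 - cos (π * α) + sin (π * α)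

theorem kadecConst_nonneg {α : ℝ} (hα0 : 0 ≤ α) (hα : α ≤ 1) : 0 ≤ kadecConst α :=
  add_nonneg (sub_nonneg.2 (cos_le_one _))
    (sin_nonneg_of_nonneg_of_le_pi (by positivity) (mul_le_of_le_one_right pi_pos.le hα))

theorem kadecConst_le_one {α : ℝ} (hα0 : 0 ≤ α) (hα : α ≤ 1 / 4) : kadecConst α ≤ 1 := by
  have hle : sin (π * α) ≤ cos (π * α) := sin_le_cos_of_nonneg_of_le_pi_div_four (by positivity)
    (by linarith [mul_le_mul_of_nonneg_left hα pi_pos.le])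
  unfold kadecConst
  linarith

section Kadec

open scoped Matrix Matrix.Norms.L2Operator

variable {ι κ : Type*} [Fintype ι] [Fintype κ] [DecidableEq κ]
  {α : ℝ} {δ : ι → ℝ} {t : κ → ℝ}

theorem l2_opNorm_one_sub_cos_hadamard_le (hα : α ≤ 1 / 2) (hδ : ‖δ‖ ≤ α)
    (ht : ∀ k, t k ∈ Set.Icc (-π) π) (A : Matrix ι κ ℂ) :
    ‖(Matrix.of fun j k => 1 - Complex.cos (δ j * t k)) ⊙ A‖ ≤ (1 - cos (π * α)) * ‖A‖ := by
  have hα0 : 0 ≤ α := (norm_nonneg δ).trans hδ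
  have hδ' (j : ι) : |δ j| ≤ α := (norm_le_pi_norm δ j).trans hδ
  refine l2_opNorm_hadamard_le
    (fun j k => hasSum_one_sub_cos ((hδ' j).trans_lt (by linarith)) (ht k)) (fun m => ?_)
    (fun m => ?_) (hasSum_cosCoeff (by rw [abs_of_nonneg hα0]; linarith)) A
  · refine (pi_norm_le_iff_of_nonneg
      ((abs_nonneg _).trans (abs_cosCoeff_le_cosCoeff (abs_of_nonneg hα0).le hα m))).2 fun j => ?_
    rw [Complex.norm_real]
    exact abs_cosCoeff_le_cosCoeff (hδ' j) hα m
  · exact (pi_norm_le_iff_of_nonneg zero_le_one).2 fun k => by simp [Complex.norm_exp]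

theorem l2_opNorm_sin_hadamard_le (hα : α ≤ 1 / 4) (hδ : ‖δ‖ ≤ α)
    (ht : ∀ k, t k ∈ Set.Icc (-π) π) (A : Matrix ι κ ℂ) :
    ‖(Matrix.of fun j k => Complex.sin (δ j * t k)) ⊙ A‖ ≤ sin (π * α) * ‖A‖ := by
  have hα0 : 0 ≤ α := (norm_nonneg δ).trans hδ
  have hδ' (j : ι) : |δ j| ≤ α := (norm_le_pi_norm δ j).trans hδ
  refine l2_opNorm_hadamard_le
    (fun j k => hasSum_sin ((hδ' j).trans_lt (by linarith)) (ht k)) (fun m => ?_)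
    (fun m => ?_) (hasSum_sinCoeff (by rw [abs_of_nonneg hα0]; linarith)) A
  · refine (pi_norm_le_iff_of_nonneg
      ((abs_nonneg _).trans (abs_sinCoeff_le_sinCoeff (abs_of_nonneg hα0).le hα m))).2 fun j => ?_
    rw [Complex.norm_real]
    exact abs_sinCoeff_le_sinCoeff (hδ' j) hα m
  · exact (pi_norm_le_iff_of_nonneg zero_le_one).2 fun k => by simp [Complex.norm_exp]

theorem l2_opNorm_exp_sub_one_hadamard_le (hα : α ≤ 1 / 4) (hδ : ‖δ‖ ≤ α)
    (ht : ∀ k, t k ∈ Set.Icc (-π) π) (A : Matrix ι κ ℂ) :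
    ‖(Matrix.of fun j k => Complex.exp (Complex.I * δ j * t k) - 1) ⊙ A‖ ≤
      kadecConst α * ‖A‖ := by
  have hsplit : (Matrix.of fun j k => Complex.exp (Complex.I * δ j * t k) - 1) ⊙ A =
      Complex.I • ((Matrix.of fun j k => Complex.sin (δ j * t k)) ⊙ A) -
        (Matrix.of fun j k => 1 - Complex.cos (δ j * t k)) ⊙ A := by
    ext j k
    simp only [Matrix.hadamard_apply, Matrix.of_apply, Matrix.sub_apply, Matrix.smul_apply,
      smul_eq_mul]
    rw [mul_assoc, mul_comm Complex.I, Complex.exp_mul_I]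
    ring
  have hcos := l2_opNorm_one_sub_cos_hadamard_le (hα.trans (by norm_num)) hδ ht A
  have hsin := l2_opNorm_sin_hadamard_le hα hδ ht A
  rw [hsplit, kadecConst]
  refine (norm_sub_le _ _).trans ?_
  rw [norm_smul, Complex.norm_I, one_mul]
  linarith

end Kadec

section ScaledIsometry

open scoped Matrix Matrix.Norms.L2Operator

variable {𝕜 ι κ : Type*} [RCLike 𝕜] [Fintype ι] [Fintype κ] [DecidableEq κ]
  {A : Matrix ι κ 𝕜} {r : ℝ}

theorem norm_toLp_mulVec_of_conjTranspose_mul_self (hr : 0 ≤ r)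
    (hA : Aᴴ * A = ((r ^ 2 : ℝ) : 𝕜) • 1) (c : κ → 𝕜) :
    ‖WithLp.toLp 2 (A *ᵥ c)‖ = r * ‖WithLp.toLp 2 c‖ := by
  have hinner : inner 𝕜 (WithLp.toLp 2 (A *ᵥ c)) (WithLp.toLp 2 (A *ᵥ c)) =
      ((r ^ 2 : ℝ) : 𝕜) * inner 𝕜 (WithLp.toLp 2 c) (WithLp.toLp 2 c) := by
    simp only [EuclideanSpace.inner_toLp_toLp]
    rw [dotProduct_comm, Matrix.star_mulVec, ← Matrix.dotProduct_mulVec, Matrix.mulVec_mulVec, hA,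
      Matrix.smul_mulVec, Matrix.one_mulVec, dotProduct_smul, smul_eq_mul, dotProduct_comm]
  rw [inner_self_eq_norm_sq_to_K, inner_self_eq_norm_sq_to_K, ← RCLike.ofReal_pow,
    ← RCLike.ofReal_pow, ← RCLike.ofReal_mul, RCLike.ofReal_inj, ← mul_pow] at hinner
  exact (sq_eq_sq₀ (norm_nonneg _) (by positivity)).1 hinner

theorem l2_opNorm_le_of_conjTranspose_mul_self (hr : 0 ≤ r)
    (hA : Aᴴ * A = ((r ^ 2 : ℝ) : 𝕜) • 1) : ‖A‖ ≤ r := by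
  rw [Matrix.l2_opNorm_def]
  refine ContinuousLinearMap.opNorm_le_bound _ hr fun c => ?_
  exact (norm_toLp_mulVec_of_conjTranspose_mul_self hr hA c.ofLp).le

end ScaledIsometry

open scoped Matrix Matrix.Norms.L2Operator in
theorem abs_norm_toLp_exp_hadamard_mulVec_sub_le {ι κ : Type*} [Fintype ι] [Fintype κ]
    [DecidableEq κ] {A : Matrix ι κ ℂ} {r : ℝ} (hr : 0 ≤ r)
    (hA : Aᴴ * A = ((r ^ 2 : ℝ) : ℂ) • 1) {α : ℝ} {δ : ι → ℝ} {t : κ → ℝ} (hα : α ≤ 1 / 4)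
    (hδ : ‖δ‖ ≤ α) (ht : ∀ k, t k ∈ Set.Icc (-π) π) (c : κ → ℂ) :
    |‖WithLp.toLp 2 (((Matrix.of fun j k => Complex.exp (Complex.I * δ j * t k)) ⊙ A) *ᵥ c)‖ -
      r * ‖WithLp.toLp 2 c‖| ≤ kadecConst α * (r * ‖WithLp.toLp 2 c‖) := by
  let K : Matrix ι κ ℂ := Matrix.of fun j k => Complex.exp (Complex.I * δ j * t k)
  let D : Matrix ι κ ℂ := Matrix.of fun j k => Complex.exp (Complex.I * δ j * t k) - 1
  have hdiff : WithLp.toLp 2 ((K ⊙ A) *ᵥ c) - WithLp.toLp 2 (A *ᵥ c) =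
      WithLp.toLp 2 ((D ⊙ A) *ᵥ c) := by
    have hD : D ⊙ A = K ⊙ A - A := by
      ext j k
      exact sub_one_mul _ _
    rw [hD, Matrix.sub_mulVec, WithLp.toLp_sub]
  calc |‖WithLp.toLp 2 ((K ⊙ A) *ᵥ c)‖ - r * ‖WithLp.toLp 2 c‖|
      ≤ ‖WithLp.toLp 2 ((D ⊙ A) *ᵥ c)‖ := by
        rw [← norm_toLp_mulVec_of_conjTranspose_mul_self hr hA, ← hdiff]
        exact abs_norm_sub_norm_le _ _
    _ ≤ ‖D ⊙ A‖ * ‖WithLp.toLp 2 c‖ := Matrix.l2_opNorm_mulVec (D ⊙ A) (WithLp.toLp 2 c)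
    _ ≤ kadecConst α * (r * ‖WithLp.toLp 2 c‖) := by
        rw [← mul_assoc]
        have hkadec : 0 ≤ kadecConst α :=
          kadecConst_nonneg ((norm_nonneg δ).trans hδ) (hα.trans (by norm_num))
        grw [l2_opNorm_exp_sub_one_hadamard_le hα hδ ht A,
          l2_opNorm_le_of_conjTranspose_mul_self hr hA]

theorem sum_Icc_neg_zpow_eq_zero {F : Type*} [Field F] {z : F} {N : ℕ} (hz1 : z ≠ 1)
    (hz : z ^ (2 * N + 1) = 1) : ∑ j ∈ Finset.Icc (-(N : ℤ)) N, z ^ j = 0 := by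
  have hz0 : z ≠ 0 := fun h0 => by simp [h0] at hz
  have hshift : ∑ j ∈ Finset.Icc (-(N : ℤ)) N, z ^ j =
      ∑ i ∈ Finset.range (2 * N + 1), z ^ i * z ^ (-(N : ℤ)) := by
    refine Finset.sum_bij' (fun j _ => (j + N).toNat) (fun i _ => (i - N : ℤ)) ?_ ?_ ?_ ?_ ?_ <;>
      simp only [Finset.mem_Icc, Finset.mem_range]
    case refine_5 =>
      intro j hj
      rw [← zpow_natCast, ← zpow_add₀ hz0]
      congr 1
      lia
    all_goals lia
  rw [hshift, ← Finset.sum_mul, geom_sum_eq hz1, hz, sub_self, zero_div, zero_mul]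

/-- The spacing `h = 2π / (2N+1)` of the unperturbed nodes. -/
noncomputable def nodeSpacing (N : ℕ) : ℝ := 2 * π / (2 * N + 1)

theorem nodeSpacing_pos (N : ℕ) : 0 < nodeSpacing N := by
  unfold nodeSpacing
  positivity

theorem intCast_mul_nodeSpacing_mem_Icc {N : ℕ} {k : ℤ} (hk : k ∈ Finset.Icc (-(N : ℤ)) N) :
    k * nodeSpacing N ∈ Set.Icc (-π) π := by
  have hkN : |(k : ℝ)| ≤ N := by exact_mod_cast abs_le.2 (Finset.mem_Icc.1 hk)
  have hNh : N * nodeSpacing N ≤ π := by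
    rw [nodeSpacing, mul_div_assoc', div_le_iff₀ (by positivity)]
    linarith [pi_pos]
  rw [Set.mem_Icc, ← abs_le, abs_mul, abs_of_pos (nodeSpacing_pos N)]
  exact (mul_le_mul_of_nonneg_right hkN (nodeSpacing_pos N).le).trans hNh

/-- The `2N+1`-point Fourier matrix `(exp (i k j h))` with `h = nodeSpacing N`, row index `j` (the
node `j h`) and column index `k` (the frequency) both in `[-N, N]`. It is not normalized. -/
noncomputable def dftMatrix (N : ℕ) :
    Matrix (Finset.Icc (-(N : ℤ)) N) (Finset.Icc (-(N : ℤ)) N) ℂ :=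
  Matrix.of fun j k => Complex.exp (Complex.I * (k : ℤ) * ((j : ℤ) * nodeSpacing N : ℝ))

theorem star_dftMatrix_mul_dftMatrix {N : ℕ} (j k l : Finset.Icc (-(N : ℤ)) N) :
    star (dftMatrix N j k) * dftMatrix N j l =
      (Complex.exp (2 * π * Complex.I / (2 * N + 1 : ℕ)) ^ ((l - k : ℤ))) ^ (j : ℤ) := by
  simp only [dftMatrix, nodeSpacing, Matrix.of_apply, Complex.star_def, ← Complex.exp_conj, map_mul,
    Complex.conj_I, Complex.conj_ofReal, map_intCast, ← Complex.exp_int_mul,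
    ← Complex.exp_add]
  push_cast
  ring_nf

open scoped Matrix in
theorem conjTranspose_dftMatrix_mul_self (N : ℕ) :
    (dftMatrix N)ᴴ * dftMatrix N = ((√(2 * N + 1) ^ 2 : ℝ) : ℂ) • 1 := by
  have hζ := Complex.isPrimitiveRoot_exp (2 * N + 1) (by lia)
  ext k l
  simp only [Matrix.mul_apply, Matrix.conjTranspose_apply, star_dftMatrix_mul_dftMatrix,
    Matrix.smul_apply, Matrix.one_apply, smul_eq_mul, mul_ite, mul_one, mul_zero]
  rw [Real.sq_sqrt (by positivity)]
  split_ifs with hkl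
  · have hcard : (N + 1 + N : ℤ).toNat = 2 * N + 1 := by lia
    simp [hkl, hcard]
  · rw [Finset.sum_coe_sort (Finset.Icc (-(N : ℤ)) N) fun j => (_ ^ ((l - k : ℤ))) ^ j]
    refine sum_Icc_neg_zpow_eq_zero (fun hone => hkl (Subtype.ext ?_)) ?_
    · have hdvd := (hζ.zpow_eq_one_iff_dvd _).1 hone
      have hk := Finset.mem_Icc.1 k.2
      have hl := Finset.mem_Icc.1 l.2
      have := Int.eq_zero_of_abs_lt_dvd hdvd (by rw [abs_lt]; push_cast; lia)
      lia
    · rw [← zpow_natCast, zpow_comm, zpow_natCast, hζ.pow_eq_one, one_zpow]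

theorem PerturbedNodes.norm_div_nodeSpacing_sub_le {N : ℕ} {α : ℝ} {x : ℤ → ℝ}
    (hx : PerturbedNodes N α x) :
    ‖fun j : Finset.Icc (-(N : ℤ)) N => x j / nodeSpacing N - (j : ℤ)‖ ≤ α := by
  have hh := nodeSpacing_pos N
  have : Nonempty (Finset.Icc (-(N : ℤ)) N) := ⟨⟨0, by simp⟩⟩
  refine (pi_norm_le_iff_of_nonempty _).2 fun j => ?_
  rw [Real.norm_eq_abs, div_sub' hh.ne', abs_div, abs_of_pos hh, div_le_iff₀ hh, mul_comm _ (_ : ℝ)]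
  exact hx j j.2

open scoped Matrix in
theorem sum_mul_exp_eq_hadamard_dftMatrix_mulVec {N : ℕ} (c : ℤ → ℂ) (x : ℤ → ℝ)
    (j : Finset.Icc (-(N : ℤ)) N) :
    ∑ k ∈ Finset.Icc (-(N : ℤ)) N, c k * Complex.exp (Complex.I * k * x j) =
      (((Matrix.of fun (j k : Finset.Icc (-(N : ℤ)) N) =>
        Complex.exp (Complex.I * (x j / nodeSpacing N - (j : ℤ) : ℝ) *
          ((k : ℤ) * nodeSpacing N : ℝ))) ⊙ dftMatrix N) *ᵥ fun k => c k) j := by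
  have hh : (nodeSpacing N : ℂ) ≠ 0 := Complex.ofReal_ne_zero.2 (nodeSpacing_pos N).ne'
  rw [← Finset.sum_coe_sort, Matrix.mulVec, dotProduct]
  refine Finset.sum_congr rfl fun k _ => ?_
  rw [Matrix.hadamard_apply, dftMatrix, Matrix.of_apply, Matrix.of_apply, ← Complex.exp_add,
    mul_comm (c k)]
  congr 2
  push_cast
  field_simp
  ring

theorem abs_sqrt_mean_norm_sq_sub_le {N : ℕ} {α : ℝ} (hα : α ≤ 1 / 4) {x : ℤ → ℝ}
    (hx : PerturbedNodes N α x) {q : ℝ → ℂ} (hq : IsTrigPoly N q) :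
    |√(1 / (2 * N + 1) * ∑ j ∈ Finset.Icc (-(N : ℤ)) N, ‖q (x j)‖ ^ 2) -
        √(1 / (2 * π) * ∫ t in (-π)..π, ‖q t‖ ^ 2)| ≤
      kadecConst α * √(1 / (2 * π) * ∫ t in (-π)..π, ‖q t‖ ^ 2) := by
  obtain ⟨c, hc⟩ := hq
  have hM : (0 : ℝ) < √(2 * N + 1) := by positivity
  have hint : √(1 / (2 * π) * ∫ t in (-π)..π, ‖q t‖ ^ 2) =
      ‖WithLp.toLp 2 fun k : Finset.Icc (-(N : ℤ)) N => c k‖ := by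
    simp_rw [hc]
    rw [integral_norm_sum_exp_sq, ← mul_assoc, one_div_mul_cancel (by positivity), one_mul,
      EuclideanSpace.norm_eq, ← Finset.sum_coe_sort]
  have hmean : √(2 * N + 1) * √(1 / (2 * N + 1) * ∑ j ∈ Finset.Icc (-(N : ℤ)) N, ‖q (x j)‖ ^ 2) =
      ‖WithLp.toLp 2 fun j : Finset.Icc (-(N : ℤ)) N => q (x j)‖ := by
    rw [EuclideanSpace.norm_eq, ← Real.sqrt_mul (by positivity), ← mul_assoc,
      mul_one_div_cancel (by positivity), one_mul, ← Finset.sum_coe_sort]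
  have hkadec := abs_norm_toLp_exp_hadamard_mulVec_sub_le hM.le
    (conjTranspose_dftMatrix_mul_self N) hα hx.norm_div_nodeSpacing_sub_le
    (fun k => intCast_mul_nodeSpacing_mem_Icc k.2) fun k => c k
  rw [← funext (sum_mul_exp_eq_hadamard_dftMatrix_mulVec c x)] at hkadec
  simp_rw [← hc] at hkadec
  rw [← hmean, ← hint, ← mul_sub, abs_mul, abs_of_pos hM, mul_left_comm] at hkadec
  exact le_of_mul_le_mul_left hkadec hM

/-- Marcinkiewicz–Zygmund inequalities at α-perturbed nodes for α < 1/4. -/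
theorem mz_inequalities_perturbed (N : ℕ) (hN : 0 < N) (α : ℝ) (hα0 : 0 ≤ α) (hα : α < 1/4)
    (x : ℤ → ℝ) (hx : PerturbedNodes N α x)
    (q : ℝ → ℂ) (hq : IsTrigPoly N q) :
    ((1 - (1 - Real.cos (π*α) + Real.sin (π*α)))^2 / (2*π)) * (∫ t in (-π)..π, ‖q t‖^2) ≤
        (1/(2*(N:ℝ)+1)) * ∑ j ∈ Finset.Icc (-(N:ℤ)) (N:ℤ), ‖q (x j)‖^2 ∧
    (1/(2*(N:ℝ)+1)) * ∑ j ∈ Finset.Icc (-(N:ℤ)) (N:ℤ), ‖q (x j)‖^2 ≤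
        ((1 + (1 - Real.cos (π*α) + Real.sin (π*α)))^2 / (2*π)) * (∫ t in (-π)..π, ‖q t‖^2) := by
  have hint : 0 ≤ 1 / (2 * π) * ∫ t in (-π)..π, ‖q t‖ ^ 2 :=
    mul_nonneg (by positivity)
      (intervalIntegral.integral_nonneg (by linarith [pi_pos]) fun t _ => by positivity)
  have hsq (z : ℝ) : z ^ 2 / (2 * π) * ∫ t in (-π)..π, ‖q t‖ ^ 2 =
      (z * √(1 / (2 * π) * ∫ t in (-π)..π, ‖q t‖ ^ 2)) ^ 2 := by
    rw [mul_pow, Real.sq_sqrt hint]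
    ring
  have hφ : 0 ≤ 1 - kadecConst α := sub_nonneg.2 (kadecConst_le_one hα0 hα.le)
  obtain ⟨hlower, hupper⟩ := abs_le.1 (abs_sqrt_mean_norm_sq_sub_le hα.le hx hq)
  rw [← kadecConst, hsq, hsq, ← Real.le_sqrt (by positivity) (by positivity),
    ← Real.sqrt_le_left (by have := kadecConst_nonneg hα0 (by linarith); positivity)]
  constructor <;> linarith
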